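/- Inversion theorem for the QPFT: let f ∈ L¹(ℝ) be such that Q_μ[f] ∈ L¹(ℝ). Then for almost every t ∈ ℝ, f(t) = ∫_ℝ Q_μ[f](ξ) · conj(K_μ(t, ξ)) dξ, where K_μ(t, ξ) = √(b/(2πi)) e^{i(at² + btξ + cξ² + dt + eξ)}. -/

import Mathlib

open MeasureTheory Complex

/-- The constant √(b/(2πi)) = √(b/(2π))·e^{−iπ/4}. -/
noncomputable def qpConst (b : ℝ) : ℂ :=
  (Real.sqrt (b / (2 * Real.pi)) : ℂ) * Complex.exp (-((Real.pi / 4 : ℝ) : ℂ) * Complex.I)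

/-- The dilation ψ_α(t) = α^{−1/2} ψ(t/α). -/
noncomputable def dil (ψ : ℝ → ℂ) (α : ℝ) (t : ℝ) : ℂ :=
  ((α ^ (-(1 / 2 : ℝ)) : ℝ) : ℂ) * ψ (t / α)

/-- The quadratic-phase Fourier transform. -/
noncomputable def QPFT (a b c d e : ℝ) (f : ℝ → ℂ) (ξ : ℝ) : ℂ :=
  qpConst b * ∫ t : ℝ, f t *
    Complex.exp (Complex.I * ((a * t ^ 2 + b * t * ξ + c * ξ ^ 2 + d * t + e * ξ : ℝ) : ℂ))

/-- The quadratic-phase wave packet transform of `f` with respect to the wavelet `ψ`. -/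
noncomputable def QPWPT (a b c d e : ℝ) (ψ f : ℝ → ℂ) (ξ β α : ℝ) : ℂ :=
  qpConst b * ∫ t : ℝ,
    Complex.exp (Complex.I * ((2 * a * t ^ 2 + b * t * ξ + c * ξ ^ 2 + 2 * d * t + e * ξ
      - a * β ^ 2 - d * β : ℝ) : ℂ)) * f t * (starRingEnd ℂ) (dil ψ α (t - β))

/-- The analyzing packet ψ^μ_{ξ,β,α}. -/
noncomputable def qpwPacket (a b c d e : ℝ) (ψ : ℝ → ℂ) (ξ β α : ℝ) (t : ℝ) : ℂ :=
  (starRingEnd ℂ) (qpConst b) *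
    Complex.exp (-Complex.I * ((2 * a * t ^ 2 + b * t * ξ + c * ξ ^ 2 + 2 * d * t + e * ξ
      - a * β ^ 2 - d * β : ℝ) : ℂ)) * dil ψ α (t - β)

/-!
Splitting the phase as `(at² + dt) + (cξ² + eξ) + btξ` exhibits the QPFT as a chirp in `ξ` times
the inverse Fourier transform of a chirped `f`, evaluated at `bξ/(2π)`. The chirps have modulus
one, so they affect neither integrability nor, after conjugation, the reconstruction, and the claim
reduces to Fourier inversion almost everywhere. The Jacobian `2π/b` of the dilation cancels
`|√(b/(2πi))|²`.

Almost-everywhere Fourier inversion for `f, 𝓕⁻ f ∈ L¹` follows by pairing both sides with test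
functions: self-adjointness moves `𝓕` and `𝓕⁻` onto the test function, where inversion is known.
-/

open scoped FourierTransform ContDiff

section FourierInversion

variable {V E : Type*} [NormedAddCommGroup V] [InnerProductSpace ℝ V] [MeasurableSpace V]
  [BorelSpace V] [FiniteDimensional ℝ V] [NormedAddCommGroup E] [NormedSpace ℂ E]

theorem continuous_fourier_of_integrable {f : V → E} (hf : Integrable f) : Continuous (𝓕 f) :=
  VectorFourier.fourierIntegral_continuous (L := innerₗ V) Real.continuous_fourierChar
    continuous_inner hf

variable [CompleteSpace E]

theorem integral_fourier_smul_eq_integral_smul_fourier {φ : V → ℂ} {f : V → E}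
    (hφ : Integrable φ) (hf : Integrable f) : ∫ x, 𝓕 φ x • f x = ∫ x, φ x • 𝓕 f x := by
  have hflip := VectorFourier.integral_fourierIntegral_smul_eq_flip (L := innerₗ V)
    Real.continuous_fourierChar continuous_inner hφ hf
  rwa [flip_innerₗ] at hflip

theorem integral_fourierInv_smul_eq_integral_smul_fourierInv {φ : V → ℂ} {f : V → E}
    (hφ : Integrable φ) (hf : Integrable f) : ∫ x, 𝓕⁻ φ x • f x = ∫ x, φ x • 𝓕⁻ f x :=
  calc
    ∫ x, 𝓕⁻ φ x • f x = ∫ x, 𝓕 φ x • f (-x) := by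
      rw [← integral_neg_eq_self]
      simp only [Real.fourierInv_eq_fourier_neg, neg_neg]
    _ = ∫ x, φ x • 𝓕⁻ f x := by
      rw [integral_fourier_smul_eq_integral_smul_fourier hφ hf.comp_neg,
        Real.fourierInv_eq_fourier_comp_neg]

theorem integral_schwartz_smul_fourier_fourierInv {f : V → E} (hf : Integrable f)
    (hFf : Integrable (𝓕⁻ f)) (φ : SchwartzMap V ℂ) :
    ∫ x, φ x • 𝓕 (𝓕⁻ f) x = ∫ x, φ x • f x :=
  calc
    ∫ x, φ x • 𝓕 (𝓕⁻ f) x = ∫ x, (𝓕 φ) x • 𝓕⁻ f x := by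
      rw [SchwartzMap.fourier_coe,
        integral_fourier_smul_eq_integral_smul_fourier φ.integrable hFf]
    _ = ∫ x, (𝓕⁻ (𝓕 φ)) x • f x := by
      rw [SchwartzMap.fourierInv_coe,
        integral_fourierInv_smul_eq_integral_smul_fourierInv (𝓕 φ).integrable hf]
    _ = ∫ x, φ x • f x := by rw [FourierTransform.fourierInv_fourier_eq]

theorem fourier_fourierInv_ae_eq {f : V → E} (hf : Integrable f) (hFf : Integrable (𝓕⁻ f)) :
    𝓕 (𝓕⁻ f) =ᵐ[volume] f := by
  refine ae_eq_of_integral_contDiff_smul_eq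
    (continuous_fourier_of_integrable hFf).locallyIntegrable hf.locallyIntegrable
    fun g g_smooth g_supp ↦ ?_
  have φ_supp : HasCompactSupport fun x ↦ (g x : ℂ) := g_supp.comp_left ofReal_zero
  have φ_smooth : ContDiff ℝ ∞ fun x ↦ (g x : ℂ) := ofRealCLM.contDiff.comp g_smooth
  simpa using integral_schwartz_smul_fourier_fourierInv hf hFf (φ_supp.toSchwartzMap φ_smooth)

end FourierInversion

theorem integrable_circle_smul_iff {α E : Type*} [MeasurableSpace α] {μ : Measure α}
    [NormedAddCommGroup E] [NormedSpace ℂ E] {u : α → Circle} (hu : AEStronglyMeasurable u μ)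
    {f : α → E} : Integrable (fun x ↦ u x • f x) μ ↔ Integrable f μ := by
  have smul_integrable {v : α → Circle} (hv : AEStronglyMeasurable v μ) {g : α → E}
      (hg : Integrable g μ) : Integrable (fun x ↦ v x • g x) μ := by
    simpa only [← integrable_norm_iff (hv.fun_smul hg.1), Circle.norm_smul] using hg.norm
  refine ⟨fun h ↦ ?_, smul_integrable hu⟩
  simpa only [Pi.inv_apply, inv_smul_smul] using smul_integrable hu.inv h

theorem integral_circle_smul {α E : Type*} [MeasurableSpace α] {μ : Measure α}
    [NormedAddCommGroup E] [NormedSpace ℂ E] (z : Circle) (f : α → E) :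
    ∫ x, z • f x ∂μ = z • ∫ x, f x ∂μ :=
  integral_smul (z : ℂ) f

theorem qpConst_mul_conj {b : ℝ} (hb : 0 ≤ b) :
    qpConst b * (starRingEnd ℂ) (qpConst b) = ((b / (2 * Real.pi) : ℝ) : ℂ) := by
  rw [mul_conj, normSq_eq_norm_sq, qpConst, norm_mul, ← ofReal_neg, norm_exp_ofReal_mul_I,
    norm_real, mul_one, Real.norm_eq_abs, sq_abs, Real.sq_sqrt (by positivity)]

theorem qpConst_ne_zero {b : ℝ} (hb : 0 < b) : qpConst b ≠ 0 :=
  mul_ne_zero (ofReal_ne_zero.2 (by positivity)) (exp_ne_zero _)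

/-- The chirp `e^{i(pt² + qt)}`, as a point of the unit circle. Multiplication by chirps turns the
quadratic-phase Fourier transform into the ordinary one. -/
noncomputable def chirp (p q t : ℝ) : Circle := Circle.exp (p * t ^ 2 + q * t)

/-- The kernel `K_μ(t, ξ)` of the quadratic-phase Fourier transform with parameters
`μ = (a, b, c, d, e)`. -/
noncomputable def qpKernel (a b c d e t ξ : ℝ) : ℂ :=
  qpConst b *
    exp (I * ((a * t ^ 2 + b * t * ξ + c * ξ ^ 2 + d * t + e * ξ : ℝ) : ℂ))

theorem continuous_chirp (p q : ℝ) : Continuous (chirp p q) := by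
  unfold chirp
  fun_prop

theorem integrable_chirp_smul_iff {E : Type*} [NormedAddCommGroup E] [NormedSpace ℂ E]
    {μ : Measure ℝ} (p q : ℝ) {f : ℝ → E} :
    Integrable (fun t ↦ chirp p q t • f t) μ ↔ Integrable f μ :=
  integrable_circle_smul_iff (continuous_chirp p q).aestronglyMeasurable

theorem exp_quadratic_phase_eq (a b c d e t ξ : ℝ) :
    exp (I * ((a * t ^ 2 + b * t * ξ + c * ξ ^ 2 + d * t + e * ξ : ℝ) : ℂ)) =
      ↑(chirp c e ξ * 𝐞 (t * (b / (2 * Real.pi) * ξ)) * chirp a d t) := by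
  have phase_split : a * t ^ 2 + b * t * ξ + c * ξ ^ 2 + d * t + e * ξ =
      (c * ξ ^ 2 + e * ξ) + 2 * Real.pi * (t * (b / (2 * Real.pi) * ξ)) +
        (a * t ^ 2 + d * t) := by
    field_simp
    ring
  rw [mul_comm I, ← Circle.coe_exp, phase_split, Circle.exp_add, Circle.exp_add]
  rfl

section QPFT

variable {a b c d e : ℝ} {f : ℝ → ℂ}

theorem QPFT_eq_chirp_smul_fourierInv (ξ : ℝ) :
    QPFT a b c d e f ξ =
      qpConst b * chirp c e ξ • 𝓕⁻ (fun t ↦ chirp a d t • f t) (b / (2 * Real.pi) * ξ) := by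
  rw [QPFT, Real.fourierInv_eq, ← integral_circle_smul]
  congr! 3 with t
  rw [exp_quadratic_phase_eq, real_inner_comm]
  simp only [Circle.smul_def, Circle.coe_mul, smul_eq_mul, RCLike.inner_apply, conj_trivial]
  ring

theorem integrable_fourierInv_chirp_smul (hb : 0 < b)
    (hQf : Integrable (QPFT a b c d e f)) :
    Integrable (𝓕⁻ fun t ↦ chirp a d t • f t) := by
  have scale_ne_zero : b / (2 * Real.pi) ≠ 0 := by positivity
  rw [← integrable_comp_mul_left_iff _ scale_ne_zero, ← integrable_chirp_smul_iff c e,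
    ← integrable_const_mul_iff (qpConst_ne_zero hb).isUnit]
  simpa only [← QPFT_eq_chirp_smul_fourierInv] using hQf

theorem QPFT_mul_conj_qpKernel (hb : 0 ≤ b) (t ξ : ℝ) :
    QPFT a b c d e f ξ * (starRingEnd ℂ) (qpKernel a b c d e t ξ) =
      (b / (2 * Real.pi)) • (chirp a d t)⁻¹ • 𝐞 (-(b / (2 * Real.pi) * ξ * t)) •
        𝓕⁻ (fun s ↦ chirp a d s • f s) (b / (2 * Real.pi) * ξ) := by
  have kernel_conj : (starRingEnd ℂ) (qpKernel a b c d e t ξ) = (starRingEnd ℂ) (qpConst b) *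
      ↑((chirp c e ξ)⁻¹ * 𝐞 (-(b / (2 * Real.pi) * ξ * t)) * (chirp a d t)⁻¹) := by
    rw [qpKernel, exp_quadratic_phase_eq, map_mul, ← Circle.coe_inv_eq_conj, mul_inv, mul_inv,
      ← AddChar.map_neg_eq_inv, mul_comm t]
  rw [QPFT_eq_chirp_smul_fourierInv, kernel_conj, ← coe_smul, ← qpConst_mul_conj hb]
  simp only [Circle.smul_def, Circle.coe_mul, Circle.coe_inv, smul_eq_mul]
  field_simp [Circle.coe_ne_zero]

theorem integral_QPFT_mul_conj_qpKernel (hb : 0 < b) (t : ℝ) :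
    ∫ ξ, QPFT a b c d e f ξ * (starRingEnd ℂ) (qpKernel a b c d e t ξ) =
      (chirp a d t)⁻¹ • 𝓕 (𝓕⁻ fun s ↦ chirp a d s • f s) t := by
  have scale_pos : 0 < b / (2 * Real.pi) := by positivity
  simp only [QPFT_mul_conj_qpKernel hb.le, integral_smul, integral_circle_smul]
  rw [Measure.integral_comp_mul_left
      (fun w ↦ 𝐞 (-(w * t)) • 𝓕⁻ (fun s ↦ chirp a d s • f s) w) (b / (2 * Real.pi)),
    ← Real.fourier_real_eq, abs_of_pos (inv_pos.2 scale_pos), smul_comm _ (_⁻¹ : ℝ),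
    smul_inv_smul₀ scale_pos.ne']

end QPFT

theorem qpft_inversion (a b c d e : ℝ) (hb : 0 < b) (f : ℝ → ℂ)
    (hf : Integrable f volume) (hQf : Integrable (QPFT a b c d e f) volume) :
    ∀ᵐ t : ℝ ∂volume, f t = ∫ ξ : ℝ, QPFT a b c d e f ξ *
      (starRingEnd ℂ) (qpConst b *
        Complex.exp (Complex.I *
          ((a * t ^ 2 + b * t * ξ + c * ξ ^ 2 + d * t + e * ξ : ℝ) : ℂ))) := by
  have chirped_integrable : Integrable fun t ↦ chirp a d t • f t :=
    (integrable_chirp_smul_iff a d).2 hf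
  filter_upwards [fourier_fourierInv_ae_eq chirped_integrable
    (integrable_fourierInv_chirp_smul hb hQf)] with t inversion_at_t
  calc
    f t = (chirp a d t)⁻¹ • 𝓕 (𝓕⁻ fun s ↦ chirp a d s • f s) t := by
      rw [inversion_at_t, inv_smul_smul]
    _ = ∫ ξ, QPFT a b c d e f ξ * (starRingEnd ℂ) (qpKernel a b c d e t ξ) :=
      (integral_QPFT_mul_conj_qpKernel hb t).symm
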